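/- Let S_n(k), k ≤ n, be the inhomogeneous Gaussian walk with variances σ₁² (steps ≤ n/2) and σ₂² (steps > n/2), and fix x ∈ [a_n, a_n+1] where a_n = √((σ₁²+σ₂²) log 2) n − (√(σ₁²+σ₂²)/(4√(log 2))) log n. Define s_{k,n}(x) and f_{k,n} as before. Then there exists a sequence ε(k) → 0 such that for every 0 ≤ k ≤ n/2, P( S_n − S_n(k) ∈ [x − s_{k,n}(x) − f_{k,n}, x − s_{k,n}(x) + f_{k,n}] ) ≤ 2^{−n + (2σ₁²/(σ₁²+σ₂²)) k + ε(k) k}, where S_n − S_n(k) ~ N(0, (σ₁²+σ₂²)n/2 − kσ₁²). -/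

import Mathlib

open MeasureTheory ProbabilityTheory

/-- An interval has Gaussian measure at most its length times an upper bound of the density. -/
theorem gaussianReal_Icc_toReal_le {μ : ℝ} {v : NNReal} (hv : v ≠ 0) {a b M : ℝ} (hab : a ≤ b)
    (hM : 0 ≤ M) (h : ∀ y ∈ Set.Icc a b, gaussianPDFReal μ v y ≤ M) :
    (gaussianReal μ v (Set.Icc a b)).toReal ≤ M * (b - a) := by
  apply ENNReal.toReal_le_of_le_ofReal (mul_nonneg hM (sub_nonneg.2 hab))
  rw [gaussianReal_apply _ hv, ENNReal.ofReal_mul hM, ← Real.volume_Icc, ← setLIntegral_const]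
  exact setLIntegral_mono measurable_const fun y hy => ENNReal.ofReal_le_ofReal (h y hy)

/-- Gaussian density bound on a window of half-width `f` around `c ≥ 0`. -/
theorem gaussianPDFReal_zero_le {V c f y w : ℝ} (hw : 0 < w) (hwV : w ^ 2 ≤ 2 * V) (hc : 0 ≤ c)
    (hy : c - f ≤ y) :
    gaussianPDFReal 0 V.toNNReal y ≤ w⁻¹ * Real.exp (-(c ^ 2 - 2 * c * f) / (2 * V)) := by
  have hV : 0 < V := by nlinarith [pow_pos hw 2]
  rw [gaussianPDFReal, Real.coe_toNNReal _ hV.le, sub_zero]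
  have hwπ : w ≤ √(2 * Real.pi * V) := by
    apply Real.le_sqrt_of_sq_le
    nlinarith [Real.pi_gt_three]
  have hsq : c ^ 2 - 2 * c * f ≤ y ^ 2 := by
    nlinarith [sq_nonneg (y - c), mul_le_mul_of_nonneg_left hy hc]
  gcongr

/-- Any `x` above the level satisfies the lower bound given by the first-order expansion of the
squared level. -/
theorem level_sq_div_ge {A m x : ℝ} (hA : 0 < A) (hm : 0 < m)
    (hx : √(A * Real.log 2) * (2 * m)
      - √A / (4 * √(Real.log 2)) * Real.log (2 * m) ≤ x) :
    2 * m * Real.log 2 - Real.log (2 * m) / 2 ≤ x ^ 2 / (2 * A * m) := by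
  have hL : 0 < Real.log 2 := Real.log_pos one_lt_two
  rw [Real.sqrt_mul hA.le] at hx
  set s := √A with hs
  set t := √(Real.log 2) with ht
  have hs0 : 0 < s := Real.sqrt_pos.2 hA
  have ht0 : 0 < t := Real.sqrt_pos.2 hL
  have hAs : A = s ^ 2 := (Real.sq_sqrt hA.le).symm
  have hLt : Real.log 2 = t ^ 2 := (Real.sq_sqrt hL.le).symm
  set l := Real.log (2 * m)
  set p := s * t * (2 * m) with hp
  have hp0 : 0 ≤ p := by positivity
  have hpq : p * (s / (4 * t) * l) = s ^ 2 * m * l / 2 := by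
    rw [hp]; field_simp; ring
  have hx2 : p ^ 2 - 2 * (p * (s / (4 * t) * l)) ≤ x ^ 2 := by
    nlinarith [sq_nonneg (x - p), mul_le_mul_of_nonneg_left hx hp0]
  rw [le_div_iff₀ (by positivity), hAs, hLt]
  rw [hpq, hp] at hx2
  linarith

/-- The level is nonnegative for every `m > 0`. -/
theorem level_nonneg {A m : ℝ} (hA : 0 < A) (hm : 0 < m) :
    0 ≤ √(A * Real.log 2) * (2 * m) - √A / (4 * √(Real.log 2)) * Real.log (2 * m) := by
  have hL : 1 / 2 < Real.log 2 := by linarith [Real.log_two_gt_d9]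
  have ht0 : 0 < √(Real.log 2) := Real.sqrt_pos.2 (by linarith)
  have hLt : √(Real.log 2) ^ 2 = Real.log 2 := Real.sq_sqrt (by linarith)
  have hl : Real.log (2 * m) ≤ 2 * m - 1 := Real.log_le_sub_one_of_pos (by linarith)
  rw [Real.sqrt_mul hA.le, sub_nonneg, div_mul_eq_mul_div, div_le_iff₀ (by positivity)]
  have h8 : Real.log (2 * m) ≤ 8 * (√(Real.log 2) ^ 2 * m) := by
    rw [hLt]; nlinarith
  nlinarith [mul_le_mul_of_nonneg_left h8 (Real.sqrt_nonneg A)]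

/-- The window probability, with an explicit error factor in the half-width `f`. -/
theorem gaussianReal_window_le {A a b m k f x : ℝ} (hb : 0 < b) (hA : A = a ^ 2 + b ^ 2)
    (hm : 1 ≤ m) (hk : 0 ≤ k) (hkm : k ≤ m) (hf : 0 ≤ f)
    (hx : √(A * Real.log 2) * (2 * m)
      - √A / (4 * √(Real.log 2)) * Real.log (2 * m) ≤ x)
    (hx' : x ≤ √(A * Real.log 2) * (2 * m)
      - √A / (4 * √(Real.log 2)) * Real.log (2 * m) + 1) :
    (gaussianReal 0 (A * (2 * m) / 2 - k * a ^ 2).toNNReal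
      (Set.Icc (x - a ^ 2 * k * x / (A * m) - f) (x - a ^ 2 * k * x / (A * m) + f))).toReal
    ≤ 2 * f / b * Real.exp ((-(2 * m) + 2 * a ^ 2 / A * k) * Real.log 2
        + (2 * √(A * Real.log 2) + 1) / A * f) := by
  have hA0 : 0 < A := by rw [hA]; positivity
  have hm0 : 0 < m := by linarith
  have hl : 0 ≤ Real.log (2 * m) := Real.log_nonneg (by linarith)
  have hx0 : 0 ≤ x := (level_nonneg hA0 hm0).trans hx
  have hlevel := level_sq_div_ge hA0 hm0 hx
  set V := A * (2 * m) / 2 - k * a ^ 2 with hV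
  set r := a ^ 2 * k / (A * m) with hr
  have hVr : V = A * m * (1 - r) := by rw [hV, hr]; field_simp
  have hVb : b ^ 2 * m ≤ V := by
    rw [hV, hA]; nlinarith [mul_le_mul_of_nonneg_right hkm (sq_nonneg a)]
  have hV0 : 0 < V := lt_of_lt_of_le (by positivity) hVb
  have hr0 : 0 ≤ r := by positivity
  have hr1 : 0 < 1 - r := by
    rw [hVr] at hV0; exact (pos_iff_pos_of_mul_pos hV0).1 (by positivity)
  have hc : x - a ^ 2 * k * x / (A * m) = x * (1 - r) := by rw [hr]; ring
  rw [hc]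
  set w := b * √(2 * m) with hw
  have hs0 : 0 < √(2 * m) := Real.sqrt_pos.2 (by linarith)
  have hw0 : 0 < w := mul_pos hb hs0
  have hwV : w ^ 2 ≤ 2 * V := by
    rw [hw, mul_pow, Real.sq_sqrt (by linarith)]; linarith
  set c := x * (1 - r) with hcdef
  have hc0 : 0 ≤ c := mul_nonneg hx0 hr1.le
  have hVne : V.toNNReal ≠ 0 := (Real.toNNReal_pos.2 hV0).ne'
  refine (gaussianReal_Icc_toReal_le (M := w⁻¹ * Real.exp (-(c ^ 2 - 2 * c * f) / (2 * V)))
    hVne (by linarith) (by positivity)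
    fun y hy => gaussianPDFReal_zero_le hw0 hwV hc0 hy.1).trans ?_
  have hexponent : -(c ^ 2 - 2 * c * f) / (2 * V)
      = -((1 - r) * (x ^ 2 / (2 * A * m))) + x / (A * m) * f := by
    rw [hVr, hcdef]; field_simp; ring
  have hxm : x / (A * m) ≤ (2 * √(A * Real.log 2) + 1) / A := by
    rw [div_le_div_iff₀ (by positivity) hA0]
    have hq : 0 ≤ √A / (4 * √(Real.log 2)) * Real.log (2 * m) := by positivity
    have : x ≤ (2 * √(A * Real.log 2) + 1) * m := by linarith
    nlinarith
  have hlin : (-(2 * m) + 2 * a ^ 2 / A * k) * Real.log 2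
      = -((1 - r) * (2 * m * Real.log 2)) := by
    rw [hr]; field_simp; ring
  have hle : -(c ^ 2 - 2 * c * f) / (2 * V)
      ≤ ((-(2 * m) + 2 * a ^ 2 / A * k) * Real.log 2
        + (2 * √(A * Real.log 2) + 1) / A * f) + Real.log (2 * m) / 2 := by
    rw [hexponent, hlin]
    nlinarith [mul_le_mul_of_nonneg_left hlevel hr1.le, mul_le_mul_of_nonneg_right hxm hf,
      mul_nonneg hr0 hl]
  have hsqrt : Real.exp (Real.log (2 * m) / 2) = √(2 * m) := by
    rw [← Real.log_sqrt (by linarith), Real.exp_log hs0]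
  have hexp := Real.exp_le_exp.2 hle
  rw [Real.exp_add, hsqrt] at hexp
  calc _ ≤ w⁻¹ * (Real.exp ((-(2 * m) + 2 * a ^ 2 / A * k) * Real.log 2
        + (2 * √(A * Real.log 2) + 1) / A * f) * √(2 * m)) * (c + f - (c - f)) := by
        have : 0 ≤ c + f - (c - f) := by linarith
        gcongr
    _ = _ := by rw [hw]; field_simp; ring

/-- decay of the probability that the increment S_n - S_n(k) lands
in the admissible window, increasing variances case; S_n - S_n(k) is a centered
Gaussian with variance (σ₁²+σ₂²)n/2 - kσ₁² (n = 2m, k ≤ m). -/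
theorem stmt16 (σ1 σ2 : ℝ) (h1 : 0 < σ1) (h12 : σ1 < σ2)
    (cf : ℝ) (hcf : 0 < cf) :
    ∃ ε : ℕ → ℝ, Filter.Tendsto ε Filter.atTop (nhds 0) ∧
      ∀ m : ℕ, 1 ≤ m → ∀ x : ℝ,
        (Real.sqrt ((σ1^2 + σ2^2) * Real.log 2) * (2*m)
          - (Real.sqrt (σ1^2 + σ2^2)/(4*Real.sqrt (Real.log 2))) * Real.log (2*m)) ≤ x →
        x ≤ (Real.sqrt ((σ1^2 + σ2^2) * Real.log 2) * (2*m)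
          - (Real.sqrt (σ1^2 + σ2^2)/(4*Real.sqrt (Real.log 2))) * Real.log (2*m)) + 1 →
        ∀ k : ℕ, k ≤ m →
        ((gaussianReal 0 (Real.toNNReal ((σ1^2 + σ2^2)*(2*m)/2 - k*σ1^2)))
          (Set.Icc
            (x - σ1^2*k*x/((σ1^2 + σ2^2)*m) - cf * (k:ℝ)^((2:ℝ)/3))
            (x - σ1^2*k*x/((σ1^2 + σ2^2)*m) + cf * (k:ℝ)^((2:ℝ)/3)))).toReal
        ≤ (2:ℝ)^(-(2*(m:ℝ)) + (2*σ1^2/(σ1^2 + σ2^2))*k + ε k * k) := by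
  have hL : 0 < Real.log 2 := Real.log_pos one_lt_two
  have h2 : 0 < σ2 := h1.trans h12
  set A := σ1 ^ 2 + σ2 ^ 2 with hA
  set D := 2 * cf / σ2 + (2 * √(A * Real.log 2) + 1) / A * cf with hD
  refine ⟨fun k => D / Real.log 2 * (k : ℝ) ^ (-(1 / 3 : ℝ)), ?_, ?_⟩
  · simpa using ((tendsto_rpow_neg_atTop (y := 1 / 3) (by norm_num)).comp
      tendsto_natCast_atTop_atTop).const_mul (D / Real.log 2)
  intro m hm x hx hx' k hkm
  have hm' : (1 : ℝ) ≤ m := by exact_mod_cast hm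
  have hkm' : (k : ℝ) ≤ m := by exact_mod_cast hkm
  have hg : 0 ≤ (k : ℝ) ^ ((2 : ℝ) / 3) := by positivity
  refine (gaussianReal_window_le h2 hA hm' k.cast_nonneg hkm' (mul_nonneg hcf.le hg)
    hx hx').trans ?_
  set g := (k : ℝ) ^ ((2 : ℝ) / 3) with hgdef
  have hpow : (k : ℝ) ^ (-(1 / 3 : ℝ)) * k = g := by
    rcases Nat.eq_zero_or_pos k with rfl | hk
    · simp [hgdef]
    · have hk' : (0 : ℝ) < k := by exact_mod_cast hk
      rw [hgdef, ← Real.rpow_add_one hk'.ne']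
      norm_num
  have hfactor : 2 * (cf * g) / σ2 ≤ Real.exp (2 * cf / σ2 * g) := by
    have := Real.add_one_le_exp (2 * cf / σ2 * g)
    have heq : 2 * (cf * g) / σ2 = 2 * cf / σ2 * g := by ring
    linarith
  rw [Real.rpow_def_of_pos two_pos]
  refine (mul_le_mul_of_nonneg_right hfactor (Real.exp_pos _).le).trans (le_of_eq ?_)
  rw [← Real.exp_add, mul_assoc (D / Real.log 2), hpow, hD]
  congr 1
  field_simp
  ring
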